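/- Let a > 0 be a real number, n ≥ 2, and let P ⊂ ℝ^n be an n-dimensional lattice polytope such that all n complex roots of its Ehrhart polynomial L_P have real part equal to -1/a. Then equality holds in #(P ∩ ℤ^n) ≤ ((a+1)^{n-2}(a+2)/a^{n-1}) · vol(P) + (a+1)^{n-2} if and only if at most one pair of complex conjugate roots of L_P has nonzero imaginary part. In particular, equality holds whenever n ∈ {2,3}. -/

import Mathlib

open MeasureTheory Polynomial Pointwise

/-- The number of integer lattice points contained in a subset of `ℝ^n`. -/
noncomputable def latticePointCount {n : ℕ} (S : Set (Fin n → ℝ)) : ℕ :=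
  {v : Fin n → ℤ | (fun i => (v i : ℝ)) ∈ S}.ncard

/-- A lattice polytope in `ℝ^n`: the convex hull of finitely many integer points. -/
def IsLatticePolytope {n : ℕ} (P : Set (Fin n → ℝ)) : Prop :=
  ∃ V : Finset (Fin n → ℤ),
    P = convexHull ℝ ((fun v : Fin n → ℤ => fun i => (v i : ℝ)) '' (V : Set (Fin n → ℤ)))

/-- `L` is the Ehrhart polynomial of `P`: for every positive integer `k` its value at `k`
is the number of lattice points of the dilate `kP`. -/
def IsEhrhartPoly {n : ℕ} (P : Set (Fin n → ℝ)) (L : Polynomial ℝ) : Prop :=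
  ∀ k : ℕ, 0 < k → L.eval (k : ℝ) = latticePointCount ((k : ℝ) • P)

/-!
By the volume asymptotics of lattice point counts, `L` has leading coefficient `vol(P)`. For its
constant term, the dilates of the standard simplex satisfy an inclusion–exclusion relation between
lattice translates, and the Euler characteristic pushes this relation forward to the dilates of `P`.
Counting lattice points, some iterated finite difference of `k ↦ #(kP ∩ ℤ^n)` vanishes on `ℕ`.
Hence `L(k) = #(kP ∩ ℤ^n)` also holds at `k = 0`, where the count is `1`.

If all roots of `L` have real part `b = -1/a`, pairing conjugate roots `b ± i y` gives
`L(b + x) / x^n = vol(P) ∏ (1 + y² / x²)`. As a function of `1 / x²` this is a polynomial with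
nonnegative coefficients, hence convex; comparing it with its chord between `x = ∞` and `x = 1/a`,
that is, between `vol(P)` and `a^n`, at the point `x = 1 + 1/a` gives the inequality. It is strict
precisely when the polynomial has degree at least two.
-/

section EulerCharacteristic

open Filter Topology

variable {ι M : Type*} [AddCommGroup M] {s : Finset ι} {c : ι → M}

theorem eventually_nhdsGT_mem_iff_mem_and_not_isGreatest {K : Set ℝ} (hconv : Convex ℝ K)
    (hclosed : IsClosed K) (t : ℝ) :
    ∀ᶠ u in 𝓝[>] t, (u ∈ K ↔ t ∈ K ∧ ¬IsGreatest K t) := by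
  by_cases ht : t ∈ K
  · by_cases hmax : IsGreatest K t
    · filter_upwards [self_mem_nhdsWithin] with u (hu : t < u)
      exact iff_of_false (fun huK => (hmax.2 huK).not_gt hu) fun h => h.2 hmax
    · obtain ⟨v, hvK, htv⟩ : ∃ v ∈ K, t < v := by
        simpa only [IsGreatest, ht, true_and, upperBounds, Set.mem_ofPred_eq, not_forall, not_le,
          exists_prop] using hmax
      filter_upwards [Ioo_mem_nhdsGT htv] with u hu
      exact iff_of_true (hconv.ordConnected.out ht hvK ⟨hu.1.le, hu.2.le⟩) ⟨ht, hmax⟩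
  · filter_upwards [nhdsWithin_le_nhds (hclosed.isOpen_compl.mem_nhds ht)] with u hu
    exact iff_of_false hu fun h => ht h.1

open scoped Classical in
theorem sum_filter_isGreatest_eq_zero {K : ι → Set ℝ}
    (hconv : ∀ i ∈ s, Convex ℝ (K i)) (hclosed : ∀ i ∈ s, IsClosed (K i))
    (h : ∀ x, ∑ i ∈ s with x ∈ K i, c i = 0) (t : ℝ) :
    ∑ i ∈ s with IsGreatest (K i) t, c i = 0 := by
  have hnear : ∀ᶠ u in 𝓝[>] t, ∀ i ∈ s, (u ∈ K i ↔ t ∈ K i ∧ ¬IsGreatest (K i) t) :=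
    (eventually_all_finset s).2 fun i hi =>
      eventually_nhdsGT_mem_iff_mem_and_not_isGreatest (hconv i hi) (hclosed i hi) t
  obtain ⟨u, hu⟩ := hnear.exists
  have hnot : ∑ i ∈ s with t ∈ K i ∧ ¬IsGreatest (K i) t, c i = 0 := by
    rw [← Finset.filter_congr hu, h]
  have hsplit := Finset.sum_filter_add_sum_filter_not {i ∈ s | t ∈ K i}
    (fun i => IsGreatest (K i) t) c
  rw [Finset.filter_filter, Finset.filter_filter, hnot, add_zero, h] at hsplit
  rw [← hsplit]
  exact Finset.sum_congr (Finset.filter_congr fun i _ => ⟨fun hi => ⟨hi.1, hi⟩, And.right⟩)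
    fun _ _ => rfl

open scoped Classical in
theorem sum_filter_nonempty_eq_zero_real {K : ι → Set ℝ}
    (hconv : ∀ i ∈ s, Convex ℝ (K i)) (hcomp : ∀ i ∈ s, IsCompact (K i))
    (h : ∀ x, ∑ i ∈ s with x ∈ K i, c i = 0) :
    ∑ i ∈ s with (K i).Nonempty, c i = 0 := by
  have hmaps : ∀ i ∈ s.filter fun i => (K i).Nonempty, sSup (K i) ∈ s.image fun i => sSup (K i) :=
    fun i hi => Finset.mem_image_of_mem _ (Finset.mem_filter.1 hi).1
  rw [← Finset.sum_fiberwise_of_maps_to hmaps]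
  refine Finset.sum_eq_zero fun t _ => ?_
  rw [← sum_filter_isGreatest_eq_zero hconv (fun i hi => (hcomp i hi).isClosed) h t,
    Finset.filter_filter]
  refine Finset.sum_congr (Finset.filter_congr fun i hi => ⟨?_, ?_⟩) fun _ _ => rfl
  · rintro ⟨hne, rfl⟩
    exact (hcomp i hi).isGreatest_sSup hne
  · exact fun ht => ⟨ht.nonempty, ht.csSup_eq⟩

theorem convex_setOf_finCons_mem {d : ℕ} {K : Set (Fin (d + 1) → ℝ)} (hK : Convex ℝ K) (t : ℝ) :
    Convex ℝ {y : Fin d → ℝ | (Fin.cons t y : Fin (d + 1) → ℝ) ∈ K} := by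
  intro x hx y hy a b ha hb hab
  have hcons : (Fin.cons t (a • x + b • y) : Fin (d + 1) → ℝ) =
      a • Fin.cons t x + b • Fin.cons t y := by
    funext j
    cases j using Fin.cases with
    | zero => simp [← add_mul, hab]
    | succ j => simp
  rw [Set.mem_ofPred_eq, hcons]
  exact hK hx hy ha hb hab

theorem isCompact_setOf_finCons_mem {d : ℕ} {K : Set (Fin (d + 1) → ℝ)} (hK : IsCompact K)
    (t : ℝ) : IsCompact {y : Fin d → ℝ | (Fin.cons t y : Fin (d + 1) → ℝ) ∈ K} :=
  (Function.LeftInverse.isClosedEmbedding (X := Fin (d + 1) → ℝ) (f := Fin.tail)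
    (g := fun y : Fin d → ℝ => Fin.cons t y) (fun _ => rfl)
    (by fun_prop) (by fun_prop)).isCompact_preimage hK

theorem mem_image_apply_zero_iff_nonempty_setOf_finCons_mem {d : ℕ} {K : Set (Fin (d + 1) → ℝ)}
    {t : ℝ} : t ∈ (fun x => x 0) '' K ↔
      {y : Fin d → ℝ | (Fin.cons t y : Fin (d + 1) → ℝ) ∈ K}.Nonempty := by
  constructor
  · rintro ⟨x, hx, rfl⟩
    exact ⟨Fin.tail x, by rwa [Set.mem_ofPred_eq, Fin.cons_self_tail]⟩
  · rintro ⟨y, hy⟩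
    exact ⟨Fin.cons t y, hy, rfl⟩

open scoped Classical in
theorem sum_filter_nonempty_eq_zero_pi {d : ℕ} {K : ι → Set (Fin d → ℝ)}
    (hconv : ∀ i ∈ s, Convex ℝ (K i)) (hcomp : ∀ i ∈ s, IsCompact (K i))
    (h : ∀ x, ∑ i ∈ s with x ∈ K i, c i = 0) :
    ∑ i ∈ s with (K i).Nonempty, c i = 0 := by
  induction d with
  | zero =>
    rw [← h 0]
    simp only [Set.Nonempty, Unique.exists_iff]
    congr!
  | succ d ih =>
    have hslice (t : ℝ) : ∑ i ∈ s with t ∈ (fun x => x 0) '' K i, c i = 0 := by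
      simp only [mem_image_apply_zero_iff_nonempty_setOf_finCons_mem]
      exact ih (fun i hi => convex_setOf_finCons_mem (hconv i hi) t)
        (fun i hi => isCompact_setOf_finCons_mem (hcomp i hi) t) fun y => h (Fin.cons t y)
    simpa only [Set.image_nonempty] using sum_filter_nonempty_eq_zero_real
      (fun i hi => (hconv i hi).linear_image (LinearMap.proj 0))
      (fun i hi => (hcomp i hi).image (continuous_apply 0)) hslice

variable {E F : Type*} [AddCommGroup E] [Module ℝ E] [TopologicalSpace E]
  [IsTopologicalAddGroup E] [ContinuousSMul ℝ E] [T2Space E] [FiniteDimensional ℝ E]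

-- In other words, the Euler characteristic is a well-defined linear functional on the span of the
-- indicator functions of compact convex sets.
open scoped Classical in
theorem sum_filter_nonempty_eq_zero {K : ι → Set E}
    (hconv : ∀ i ∈ s, Convex ℝ (K i)) (hcomp : ∀ i ∈ s, IsCompact (K i))
    (h : ∀ x, ∑ i ∈ s with x ∈ K i, c i = 0) :
    ∑ i ∈ s with (K i).Nonempty, c i = 0 := by
  let e : E ≃L[ℝ] (Fin (Module.finrank ℝ E) → ℝ) := .ofFinrankEq (Module.finrank_fin_fun ℝ).symm
  simpa only [Set.image_nonempty] using sum_filter_nonempty_eq_zero_pi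
    (fun i hi => (hconv i hi).linear_image e.toLinearMap)
    (fun i hi => (hcomp i hi).image e.continuous)
    fun y => by simpa [e.image_eq_preimage_symm] using h (e.symm y)

open scoped Classical in
theorem sum_filter_mem_image_eq_zero [AddCommGroup F] [Module ℝ F] [TopologicalSpace F] [T1Space F]
    (f : E →L[ℝ] F) {K : ι → Set E}
    (hconv : ∀ i ∈ s, Convex ℝ (K i)) (hcomp : ∀ i ∈ s, IsCompact (K i))
    (h : ∀ x, ∑ i ∈ s with x ∈ K i, c i = 0) (y : F) :
    ∑ i ∈ s with y ∈ f '' K i, c i = 0 := by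
  have hfiber : ∑ i ∈ s with (K i ∩ f ⁻¹' {y}).Nonempty, c i = 0 := by
    refine sum_filter_nonempty_eq_zero
      (fun i hi => (hconv i hi).inter ((convex_singleton y).linear_preimage f.toLinearMap))
      (fun i hi => (hcomp i hi).inter_right (isClosed_singleton.preimage f.continuous))
      fun x => ?_
    by_cases hx : f x = y
    · simpa [hx] using h x
    · simp [hx]
  simpa only [Set.Nonempty, Set.mem_inter_iff, Set.mem_preimage, Set.mem_singleton_iff,
    Set.mem_image] using hfiber

end EulerCharacteristic

section DilatedSimplex

variable {ι E : Type*} [Fintype ι]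

theorem mem_smul_stdSimplex [Nonempty ι] {r : ℝ} (hr : 0 ≤ r) {w : ι → ℝ} :
    w ∈ r • stdSimplex ℝ ι ↔ (∀ i, 0 ≤ w i) ∧ ∑ i, w i = r := by
  classical
  constructor
  · rintro ⟨u, ⟨hu, hsum⟩, rfl⟩
    exact ⟨fun i => mul_nonneg hr (hu i), by simp [← Finset.mul_sum, hsum]⟩
  · rintro ⟨hw, hsum⟩
    rcases hr.eq_or_lt with rfl | hpos
    · rw [Finset.sum_eq_zero_iff_of_nonneg fun i _ => hw i] at hsum
      obtain rfl : w = 0 := funext fun i => hsum i (Finset.mem_univ i)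
      rw [Set.zero_smul_set ⟨_, single_mem_stdSimplex ℝ (Classical.arbitrary ι)⟩]
      exact Set.mem_zero.2 rfl
    · rw [Set.mem_smul_set_iff_inv_smul_mem₀ hpos.ne']
      exact ⟨fun i => mul_nonneg (inv_nonneg.2 hr) (hw i),
        by simp [← Finset.mul_sum, hsum, hpos.ne']⟩

open Finset in
theorem mem_vadd_smul_stdSimplex [DecidableEq ι] [Nonempty ι] (k : ℕ) (S : Finset ι) {w : ι → ℝ} :
    w ∈ (∑ i ∈ S, Pi.single i (1 : ℝ)) +ᵥ ((k + #Sᶜ : ℕ) : ℝ) • stdSimplex ℝ ι ↔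
      w ∈ ((k + Fintype.card ι : ℕ) : ℝ) • stdSimplex ℝ ι ∧ ∀ i ∈ S, 1 ≤ w i := by
  have happly (j : ι) : (∑ i ∈ S, Pi.single i (1 : ℝ) : ι → ℝ) j = if j ∈ S then 1 else 0 := by
    simp [Finset.sum_apply, Pi.single_apply]
  have hcard : (#S + #Sᶜ : ℝ) = Fintype.card ι := mod_cast S.card_add_card_compl
  rw [Set.mem_vadd_set_iff_neg_vadd_mem, mem_smul_stdSimplex (Nat.cast_nonneg _),
    mem_smul_stdSimplex (Nat.cast_nonneg _)]
  simp only [vadd_eq_add, Pi.add_apply, Pi.neg_apply, happly, Finset.sum_add_distrib,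
    Finset.sum_neg_distrib, Finset.sum_boole, Finset.filter_univ_mem, Nat.cast_add]
  constructor
  · rintro ⟨hnonneg, hsum⟩
    have hge (i : ι) : (if i ∈ S then 1 else 0) ≤ w i := by linarith [hnonneg i]
    refine ⟨⟨fun i => le_trans (by positivity) (hge i), by linarith⟩, fun i hi => ?_⟩
    simpa [hi] using hge i
  · rintro ⟨⟨hnonneg, hsum⟩, hge⟩
    refine ⟨fun i => ?_, by linarith⟩
    split_ifs with hi
    · linarith [hge i hi]
    · linarith [hnonneg i]

open scoped Classical in
open Finset in
theorem sum_neg_one_pow_filter_mem_vadd_smul_stdSimplex [Nonempty ι] (k : ℕ) (w : ι → ℝ) :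
    ∑ S : Finset ι with
      w ∈ (∑ i ∈ S, Pi.single i (1 : ℝ)) +ᵥ ((k + #Sᶜ : ℕ) : ℝ) • stdSimplex ℝ ι,
      (-1 : ℤ) ^ #S = 0 := by
  simp only [mem_vadd_smul_stdSimplex]
  by_cases hw : w ∈ ((k + Fintype.card ι : ℕ) : ℝ) • stdSimplex ℝ ι
  · have hlarge : ({i | 1 ≤ w i} : Finset ι).Nonempty := by
      obtain ⟨-, hsum⟩ := (mem_smul_stdSimplex (Nat.cast_nonneg _)).1 hw
      obtain ⟨i, -, hi⟩ := Finset.exists_le_of_sum_le (s := univ) (f := fun _ => (1 : ℝ)) (g := w)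
        univ_nonempty (by simp [hsum])
      exact ⟨i, by simpa using hi⟩
    rw [← sum_powerset_neg_one_pow_card_of_nonempty hlarge]
    refine sum_congr ?_ fun _ _ => rfl
    ext S
    simp only [hw, true_and, mem_filter, mem_univ, mem_powerset, subset_iff]
  · simp only [hw, false_and, filter_false, sum_empty]

theorem smul_convexHull_range_eq_image [AddCommGroup E] [Module ℝ E] (v : ι → E) (r : ℝ) :
    r • convexHull ℝ (Set.range v) = Fintype.linearCombination ℝ v '' (r • stdSimplex ℝ ι) := by
  classical
  rw [image_smul_set, ← convexHull_rangle_single_eq_stdSimplex, LinearMap.image_convexHull,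
    ← Set.range_comp]
  congr! 3
  ext i
  simp

-- Push `sum_neg_one_pow_filter_mem_vadd_smul_stdSimplex` forward along the linear map sending the
-- vertices of the simplex to the points `v i`.
open scoped Classical in
open Finset in
theorem sum_neg_one_pow_filter_mem_vadd_smul_convexHull [AddCommGroup E] [Module ℝ E]
    [TopologicalSpace E] [IsTopologicalAddGroup E] [ContinuousSMul ℝ E] [T2Space E]
    [Nonempty ι] (v : ι → E) (k : ℕ) (x : E) :
    ∑ S : Finset ι with
      x ∈ (∑ i ∈ S, v i) +ᵥ ((k + #Sᶜ : ℕ) : ℝ) • convexHull ℝ (Set.range v),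
      (-1 : ℤ) ^ #S = 0 := by
  let f : (ι → ℝ) →L[ℝ] E := (Fintype.linearCombination ℝ v).toContinuousLinearMap
  have himage (S : Finset ι) :
      (∑ i ∈ S, v i) +ᵥ ((k + #Sᶜ : ℕ) : ℝ) • convexHull ℝ (Set.range v) =
        f '' ((∑ i ∈ S, Pi.single i (1 : ℝ)) +ᵥ ((k + #Sᶜ : ℕ) : ℝ) • stdSimplex ℝ ι) := by
    rw [Set.image_vadd_distrib, map_sum, smul_convexHull_range_eq_image]
    simp [f]
  simp only [himage]
  exact sum_filter_mem_image_eq_zero f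
    (fun S _ => ((convex_stdSimplex ℝ ι).smul _).vadd _)
    (fun S _ => ((isCompact_stdSimplex ℝ ι).smul _).vadd _)
    (sum_neg_one_pow_filter_mem_vadd_smul_stdSimplex k) x

end DilatedSimplex

section LatticePointCount

open Filter Topology

variable {n : ℕ}

/-- The inclusion of `ℤ^n` into `ℝ^n`, bundled as an additive homomorphism. -/
def latticeEmb (n : ℕ) : (Fin n → ℤ) →+ (Fin n → ℝ) := (Int.castAddHom ℝ).compLeft (Fin n)

theorem latticeEmb_injective : Function.Injective (latticeEmb n) :=
  Int.cast_injective.comp_left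

theorem latticePointCount_eq_ncard_preimage (S : Set (Fin n → ℝ)) :
    latticePointCount S = (latticeEmb n ⁻¹' S).ncard :=
  rfl

theorem finite_preimage_latticeEmb {S : Set (Fin n → ℝ)} (hS : Bornology.IsBounded S) :
    (latticeEmb n ⁻¹' S).Finite := by
  have htendsto : Tendsto (latticeEmb n) cofinite (Bornology.cobounded (Fin n → ℝ)) := by
    rw [← coprodᵢ_cofinite, Metric.cobounded_eq_cocompact, ← coprodᵢ_cocompact]
    exact Tendsto.pi_map_coprodᵢ fun _ => Int.tendsto_coe_cofinite
  simpa using htendsto (Bornology.isBounded_def.1 hS)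

theorem latticePointCount_vadd (u : Fin n → ℤ) (S : Set (Fin n → ℝ)) :
    latticePointCount (latticeEmb n u +ᵥ S) = latticePointCount S := by
  have hpreimage : latticeEmb n ⁻¹' (latticeEmb n u +ᵥ S) = u +ᵥ latticeEmb n ⁻¹' S := by
    ext v
    simp [Set.mem_vadd_set_iff_neg_vadd_mem]
  rw [latticePointCount_eq_ncard_preimage, hpreimage, Set.ncard_vadd_set,
    latticePointCount_eq_ncard_preimage]

open scoped Classical in
theorem sum_mul_latticePointCount_eq_zero {κ : Type*} {s : Finset κ} {c : κ → ℤ}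
    {K : κ → Set (Fin n → ℝ)} (hK : ∀ i ∈ s, Bornology.IsBounded (K i))
    (h : ∀ x, ∑ i ∈ s with x ∈ K i, c i = 0) :
    ∑ i ∈ s, c i * (latticePointCount (K i) : ℤ) = 0 := by
  have hbdd : Bornology.IsBounded (⋃ i ∈ s, K i) := (Bornology.isBounded_biUnion_finset s).2 hK
  let T : Finset (Fin n → ℤ) := (finite_preimage_latticeEmb hbdd).toFinset
  have hcount (i : κ) (hi : i ∈ s) :
      latticePointCount (K i) = (T.filter fun v => latticeEmb n v ∈ K i).card := by
    rw [latticePointCount_eq_ncard_preimage, ← Set.ncard_coe_finset]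
    congr 1
    ext v
    simp only [T, Finset.coe_filter, Set.Finite.mem_toFinset]
    exact ⟨fun hv => ⟨Set.mem_biUnion hi hv, hv⟩, And.right⟩
  calc ∑ i ∈ s, c i * (latticePointCount (K i) : ℤ)
    _ = ∑ i ∈ s, ∑ v ∈ T, if latticeEmb n v ∈ K i then c i else 0 :=
      Finset.sum_congr rfl fun i hi => by
        rw [hcount i hi, ← Finset.sum_filter, Finset.sum_const, nsmul_eq_mul, mul_comm]
    _ = ∑ v ∈ T, ∑ i ∈ s with latticeEmb n v ∈ K i, c i := by
      rw [Finset.sum_comm]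
      simp only [Finset.sum_filter]
    _ = 0 := Finset.sum_eq_zero fun v _ => h (latticeEmb n v)

open Finset in
theorem fwdDiff_iter_latticePointCount_smul_convexHull {ι : Type*} [Fintype ι] [Nonempty ι]
    (v : ι → Fin n → ℤ) :
    (fwdDiff 1)^[Fintype.card ι] (fun k : ℕ => (latticePointCount
      ((k : ℝ) • convexHull ℝ (Set.range fun i => latticeEmb n (v i))) : ℤ)) = 0 := by
  classical
  set P := convexHull ℝ (Set.range fun i => latticeEmb n (v i))
  have hbdd : Bornology.IsBounded P := ((Set.finite_range _).isCompact_convexHull ℝ).isBounded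
  funext k
  have hsum := sum_mul_latticePointCount_eq_zero (s := univ)
    (fun S _ => (hbdd.smul₀ ((k + #Sᶜ : ℕ) : ℝ)).vadd _)
    (sum_neg_one_pow_filter_mem_vadd_smul_convexHull (fun i => latticeEmb n (v i)) k)
  simp only [← map_sum, latticePointCount_vadd] at hsum
  rw [fwdDiff_iter_eq_sum_shift, Pi.zero_apply, ← hsum, ← compl_bijective.sum_comp,
    ← powerset_univ]
  simp only [compl_compl, card_compl]
  rw [sum_powerset_apply_card
    fun m => (-1) ^ (Fintype.card ι - m) * (latticePointCount (((k + m : ℕ) : ℝ) • P) : ℤ)]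
  simp only [card_univ, smul_eq_mul, mul_one, nsmul_eq_mul]
  exact sum_congr rfl fun m _ => by ring

theorem IsLatticePolytope.exists_fwdDiff_iter_latticePointCount_smul_eq_zero
    {P : Set (Fin n → ℝ)} (hP : IsLatticePolytope P) (hne : P.Nonempty) :
    ∃ N, (fwdDiff 1)^[N] (fun k : ℕ => (latticePointCount ((k : ℝ) • P) : ℤ)) = 0 := by
  obtain ⟨V, rfl⟩ := hP
  obtain ⟨v, hv⟩ := Set.image_nonempty.1 (convexHull_nonempty_iff.1 hne)
  have : Nonempty V := ⟨v, hv⟩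
  refine ⟨Fintype.card V, ?_⟩
  rw [Set.image_eq_range]
  exact fwdDiff_iter_latticePointCount_smul_convexHull fun v : V => (v : Fin n → ℤ)

theorem latticePointCount_zero_smul {P : Set (Fin n → ℝ)} (hne : P.Nonempty) :
    latticePointCount ((0 : ℝ) • P) = 1 := by
  rw [Set.zero_smul_set hne, latticePointCount_eq_ncard_preimage, ← Set.singleton_zero,
    ← map_zero (latticeEmb n), ← Set.image_singleton,
    Set.preimage_image_eq _ latticeEmb_injective, Set.ncard_singleton]

end LatticePointCount

section EhrhartPolynomial

open Filter Topology

theorem fwdDiff_iter_eval_natCast {R : Type*} [CommRing R] (p : R[X]) (N m : ℕ) :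
    (fwdDiff 1)^[N] (fun k : ℕ => p.eval (k : R)) m = (fwdDiff 1)^[N] p.eval (m : R) := by
  simp [fwdDiff_iter_eq_sum_shift]

theorem eq_zero_of_fwdDiff_iter_eq_zero {G : Type*} [AddCommGroup G] {f : ℕ → G} {N : ℕ}
    (hf : (fwdDiff 1)^[N] f 0 = 0) (hpos : ∀ k, 0 < k → f k = 0) : f 0 = 0 := by
  rw [fwdDiff_iter_eq_sum_shift, Finset.sum_eq_single_of_mem 0 (by simp)
    fun k _ hk => by simp [hpos k (Nat.pos_of_ne_zero hk)]] at hf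
  rcases neg_one_pow_eq_or ℤ N with hN | hN <;> simpa [hN] using hf

theorem eval_zero_eq_of_fwdDiff_iter_eq_zero {R : Type*} [CommRing R] {p : R[X]} {f : ℕ → R}
    {N : ℕ} (hf : (fwdDiff 1)^[N] f = 0) (hp : ∀ k : ℕ, 0 < k → p.eval (k : R) = f k) :
    p.eval 0 = f 0 := by
  have hp' : (fwdDiff 1)^[p.natDegree + 1] (fun k : ℕ => p.eval (k : R)) = 0 := by
    funext m
    rw [fwdDiff_iter_eval_natCast, fwdDiff_iter_degree_add_one_eq_zero]
    rfl
  have hzero (M : ℕ) : (fwdDiff 1)^[M] (0 : ℕ → R) = 0 :=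
    Function.iterate_fixed (by simp [funext_iff, fwdDiff]) M
  have hdiff : (fwdDiff 1)^[N + (p.natDegree + 1)]
      ((fun k : ℕ => p.eval (k : R)) + (-1 : R) • f) = 0 := by
    rw [fwdDiff_iter_add, fwdDiff_iter_const_smul, Function.iterate_add_apply, hp', hzero,
      add_comm N, Function.iterate_add_apply _ _ _ f, hf, hzero, smul_zero, add_zero]
  have h0 := eq_zero_of_fwdDiff_iter_eq_zero (congrFun hdiff 0) fun k hk => by simp [hp k hk]
  simpa [← sub_eq_add_neg, sub_eq_zero] using h0

variable {n : ℕ} {P : Set (Fin n → ℝ)} {L : ℝ[X]}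

theorem IsEhrhartPoly.eval_zero (hL : IsEhrhartPoly P L) (hP : IsLatticePolytope P)
    (hne : P.Nonempty) : L.eval 0 = 1 := by
  obtain ⟨N, hN⟩ := hP.exists_fwdDiff_iter_latticePointCount_smul_eq_zero hne
  have hN' : (fwdDiff 1)^[N] (fun k : ℕ => (latticePointCount ((k : ℝ) • P) : ℝ)) = 0 := by
    funext m
    have hm := congrArg (Int.cast : ℤ → ℝ) (congrFun hN m)
    rw [fwdDiff_iter_eq_sum_shift] at hm ⊢
    simpa using hm
  rw [eval_zero_eq_of_fwdDiff_iter_eq_zero hN' hL, Nat.cast_zero, latticePointCount_zero_smul hne,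
    Nat.cast_one]

theorem coe_span_range_basisFun :
    (Submodule.span ℤ (Set.range (Pi.basisFun ℝ (Fin n))) : Set (Fin n → ℝ)) =
      Set.range (latticeEmb n) := by
  ext x
  rw [SetLike.mem_coe, Module.Basis.mem_span_iff_repr_mem]
  simp only [Pi.basisFun_repr, Set.mem_range, Classical.skolem (p := fun i (_ : ℤ) => _ = x i)]
  exact exists_congr fun v => funext_iff.symm

theorem tendsto_latticePointCount_smul_div_pow {S : Set (Fin n → ℝ)}
    (hbdd : Bornology.IsBounded S) (hmeas : MeasurableSet S) (hfrontier : volume (frontier S) = 0) :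
    Tendsto (fun k : ℕ => (latticePointCount ((k : ℝ) • S) : ℝ) / k ^ n) atTop
      (𝓝 (volume S).toReal) := by
  have h := tendsto_card_div_pow_atTop_volume S hbdd hmeas hfrontier
  rw [Fintype.card_fin] at h
  refine h.congr' ?_
  filter_upwards [eventually_ne_atTop 0] with k hk
  have hk' : (k : ℝ) ≠ 0 := Nat.cast_ne_zero.2 hk
  rw [coe_span_range_basisFun, Nat.card_coe_set_eq,
    ← Set.ncard_image_of_injective _ (smul_right_injective (Fin n → ℝ) hk'), Set.image_smul,
    Set.smul_set_inter₀ hk', smul_inv_smul₀ hk', ← Set.image_preimage_eq_inter_range,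
    Set.ncard_image_of_injective _ latticeEmb_injective, latticePointCount_eq_ncard_preimage]

theorem IsEhrhartPoly.leadingCoeff (hL : IsEhrhartPoly P L) (hP : IsLatticePolytope P)
    (hL0 : L ≠ 0) (hdeg : L.natDegree = n) : L.leadingCoeff = (volume P).toReal := by
  obtain ⟨V, rfl⟩ := hP
  have hcomp := (V.finite_toSet.image (latticeEmb n)).isCompact_convexHull ℝ
  have hvol := tendsto_latticePointCount_smul_div_pow hcomp.isBounded hcomp.measurableSet
    ((convex_convexHull ℝ _).addHaar_frontier volume)
  have hlead := L.div_tendsto_atTop_leadingCoeff_div_of_degree_eq (X ^ n : ℝ[X])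
    (by rw [degree_eq_natDegree hL0, hdeg, degree_X_pow])
  rw [leadingCoeff_X_pow, div_one] at hlead
  refine tendsto_nhds_unique (hlead.comp tendsto_natCast_atTop_atTop) (hvol.congr' ?_)
  filter_upwards [eventually_gt_atTop 0] with k hk
  rw [Function.comp_apply, hL k hk, eval_pow, eval_X]
  rfl

end EhrhartPolynomial

section ChordInequality

variable {R : Type*} [CommRing R] [LinearOrder R] [IsStrictOrderedRing R] {s : R} {U : Multiset R}

theorem one_le_prod_one_add (hU : ∀ u ∈ U, 0 ≤ u) : 1 ≤ (U.map fun u => 1 + u).prod :=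
  Multiset.one_le_prod_map fun u hu => le_add_of_nonneg_right (hU u hu)

theorem one_lt_prod_one_add (hU : ∀ u ∈ U, 0 < u) (hcard : 0 < U.card) :
    1 < (U.map fun u => 1 + u).prod := by
  obtain ⟨u, hu⟩ := Multiset.card_pos_iff_exists_mem.1 hcard
  obtain ⟨V, rfl⟩ := Multiset.exists_cons_of_mem hu
  rw [Multiset.map_cons, Multiset.prod_cons]
  exact one_lt_mul_of_lt_of_le (lt_add_of_pos_right 1 (hU u hu))
    (one_le_prod_one_add fun v hv => (hU v (Multiset.mem_cons_of_mem hv)).le)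

theorem prod_one_add_mul_le (hs₀ : 0 ≤ s) (hs₁ : s ≤ 1) (hU : ∀ u ∈ U, 0 ≤ u) :
    (U.map fun u => 1 + s * u).prod ≤ 1 - s + s * (U.map fun u => 1 + u).prod := by
  induction U using Multiset.induction_on with
  | empty => simp
  | cons u U ih =>
    rw [Multiset.forall_mem_cons] at hU
    simp only [Multiset.map_cons, Multiset.prod_cons]
    set Q := (U.map fun u => 1 + u).prod
    have hgap : 0 ≤ s * (1 - s) * u * (Q - 1) :=
      mul_nonneg (mul_nonneg (mul_nonneg hs₀ (sub_nonneg.2 hs₁)) hU.1)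
        (sub_nonneg.2 (one_le_prod_one_add hU.2))
    calc (1 + s * u) * (U.map fun u => 1 + s * u).prod
      _ ≤ (1 + s * u) * (1 - s + s * Q) :=
        mul_le_mul_of_nonneg_left (ih hU.2) (add_nonneg zero_le_one (mul_nonneg hs₀ hU.1))
      _ ≤ (1 + s * u) * (1 - s + s * Q) + s * (1 - s) * u * (Q - 1) := le_add_of_nonneg_right hgap
      _ = 1 - s + s * ((1 + u) * Q) := by ring

theorem prod_one_add_mul_lt (hs₀ : 0 < s) (hs₁ : s < 1) (hU : ∀ u ∈ U, 0 < u) (hcard : 1 < U.card) :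
    (U.map fun u => 1 + s * u).prod < 1 - s + s * (U.map fun u => 1 + u).prod := by
  obtain ⟨u, hu⟩ := Multiset.card_pos_iff_exists_mem.1 (zero_lt_one.trans hcard)
  obtain ⟨V, rfl⟩ := Multiset.exists_cons_of_mem hu
  rw [Multiset.forall_mem_cons] at hU
  rw [Multiset.card_cons, Nat.lt_add_left_iff_pos] at hcard
  simp only [Multiset.map_cons, Multiset.prod_cons]
  set Q := (V.map fun u => 1 + u).prod
  have hgap : 0 < s * (1 - s) * u * (Q - 1) :=
    mul_pos (mul_pos (mul_pos hs₀ (sub_pos.2 hs₁)) hU.1)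
      (sub_pos.2 (one_lt_prod_one_add hU.2 hcard))
  calc (1 + s * u) * (V.map fun u => 1 + s * u).prod
    _ ≤ (1 + s * u) * (1 - s + s * Q) :=
      mul_le_mul_of_nonneg_left (prod_one_add_mul_le hs₀.le hs₁.le fun v hv => (hU.2 v hv).le)
        (add_nonneg zero_le_one (mul_nonneg hs₀.le hU.1.le))
    _ < (1 + s * u) * (1 - s + s * Q) + s * (1 - s) * u * (Q - 1) := lt_add_of_pos_right _ hgap
    _ = 1 - s + s * ((1 + u) * Q) := by ring

theorem prod_one_add_mul_eq_iff (hs₀ : 0 < s) (hs₁ : s < 1) (hU : ∀ u ∈ U, 0 < u) :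
    (U.map fun u => 1 + s * u).prod = 1 - s + s * (U.map fun u => 1 + u).prod ↔ U.card ≤ 1 := by
  refine ⟨fun h => not_lt.1 fun hcard => (prod_one_add_mul_lt hs₀ hs₁ hU hcard).ne h,
    fun hcard => ?_⟩
  rcases Nat.le_one_iff_eq_zero_or_eq_one.1 hcard with h0 | h1
  · simp [Multiset.card_eq_zero.1 h0]
  · obtain ⟨u, rfl⟩ := Multiset.card_eq_one.1 h1
    simp only [Multiset.map_singleton, Multiset.prod_singleton]
    ring

end ChordInequality

section ConjugateRoots

open ComplexConjugate

variable {Z : Multiset ℂ}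

theorem map_conj_aroots (L : ℝ[X]) : (L.aroots ℂ).map conj = L.aroots ℂ := by
  rw [aroots_def, ← (IsAlgClosed.splits _).roots_map_of_injective (starRingEnd ℂ).injective,
    Polynomial.map_map]
  congr 2
  ext x
  simp

theorem filter_im_ne_zero_eq (hZ : Z.map conj = Z) :
    Z.filter (fun z => z.im ≠ 0) =
      Z.filter (fun z => 0 < z.im) + (Z.filter fun z => 0 < z.im).map conj := by
  have hneg : (Z.filter fun z => 0 < z.im).map conj = Z.filter fun z => z.im < 0 := by
    conv_rhs => rw [← hZ, Multiset.filter_map]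
    simp
  have hdisj : Z.filter (fun z => 0 < z.im ∧ z.im < 0) = 0 :=
    Multiset.filter_eq_nil.2 fun z _ h => lt_asymm h.1 h.2
  rw [hneg, Multiset.filter_add_filter, hdisj, add_zero]
  exact Multiset.filter_congr fun z _ => ne_iff_lt_or_gt.trans or_comm

theorem card_filter_im_ne_zero (hZ : Z.map conj = Z) :
    (Z.filter fun z => z.im ≠ 0).card = 2 * (Z.filter fun z => 0 < z.im).card := by
  rw [filter_im_ne_zero_eq hZ, Multiset.card_add, Multiset.card_map, two_mul]

theorem card_filter_im_ne_zero_aroots_le_two {L : ℝ[X]} (hdeg : L.natDegree ≤ 3) :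
    ((L.aroots ℂ).filter fun z => z.im ≠ 0).card ≤ 2 := by
  have hle : ((L.aroots ℂ).filter fun z => z.im ≠ 0).card ≤ L.natDegree :=
    (Multiset.card_le_card (Multiset.filter_le _ _)).trans (card_roots_map_le_natDegree L)
  rw [card_filter_im_ne_zero (map_conj_aroots L)] at hle ⊢
  omega

theorem prod_map_eq_prod_filter_im_pos {M : Type*} [CommMonoid M] (hZ : Z.map conj = Z) {f : ℂ → M}
    (hf : ∀ z ∈ Z, z.im = 0 → f z = 1) :
    (Z.map f).prod = ((Z.filter fun z => 0 < z.im).map fun z => f z * f (conj z)).prod := by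
  have hreal : ((Z.filter fun z => z.im = 0).map f).prod = 1 :=
    Multiset.prod_eq_one fun w hw => by
      obtain ⟨z, hz, rfl⟩ := Multiset.mem_map.1 hw
      exact hf z (Multiset.mem_filter.1 hz).1 (Multiset.mem_filter.1 hz).2
  conv_lhs => rw [← Multiset.filter_add_not (fun z : ℂ => z.im = 0) Z]
  rw [Multiset.map_add, Multiset.prod_add, hreal, one_mul, filter_im_ne_zero_eq hZ,
    Multiset.map_add, Multiset.prod_add, Multiset.map_map, ← Multiset.prod_map_mul]
  rfl

end ConjugateRoots

section VerticalLineRoots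

open ComplexConjugate

variable {L : ℝ[X]} {b : ℝ}

theorem eval_div_pow_eq_of_aroots_re_eq (hroots : ∀ z ∈ L.aroots ℂ, z.re = b) {t : ℝ}
    (ht : t ≠ b) :
    L.eval t / (t - b) ^ L.natDegree = L.leadingCoeff *
      (((L.aroots ℂ).filter fun z => 0 < z.im).map fun z => 1 + z.im ^ 2 / (t - b) ^ 2).prod := by
  have htb : (t - b : ℂ) ≠ 0 := mod_cast sub_ne_zero.2 ht
  have hfactor : ∀ z ∈ L.aroots ℂ, (t : ℂ) - z = (t - b) * (1 - z.im / (t - b) * Complex.I) := by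
    intro z hz
    conv_lhs => rw [← Complex.re_add_im z, hroots z hz]
    field_simp
    ring
  have hpair (z : ℂ) : (1 - z.im / (t - b) * Complex.I) * (1 - (conj z).im / (t - b) * Complex.I) =
      Complex.ofRealHom (1 + z.im ^ 2 / (t - b) ^ 2) := by
    rw [Complex.conj_im, ← div_pow, Complex.ofRealHom_eq_coe]
    push_cast
    linear_combination -(z.im / (t - b) : ℂ) ^ 2 * Complex.I_sq
  have hcard : (L.aroots ℂ).card = L.natDegree :=
    IsAlgClosed.card_roots_map_eq_natDegree_of_injective L (algebraMap ℝ ℂ).injective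
  have haeval : aeval (t : ℂ) L = ((L.eval t : ℝ) : ℂ) := by
    rw [← coe_aeval_eq_eval]
    exact aeval_algebraMap_apply ℂ t L
  have hprod := (IsAlgClosed.splits (L.map (algebraMap ℝ ℂ))).aeval_eq_prod_aroots (t : ℂ)
  rw [haeval, Multiset.map_congr rfl hfactor, Multiset.prod_map_mul, Multiset.map_const',
    Multiset.prod_replicate, hcard, prod_map_eq_prod_filter_im_pos (map_conj_aroots L)
      fun z _ hz => by simp [hz]] at hprod
  simp only [hpair] at hprod
  rw [Multiset.prod_hom', Complex.ofRealHom_eq_coe, Complex.coe_algebraMap,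
    mul_left_comm] at hprod
  rw [div_eq_iff (pow_ne_zero _ (sub_ne_zero.2 ht)), mul_comm]
  exact_mod_cast hprod

theorem eval_div_pow_eq_iff_card_filter_im_ne_zero_le_two (hL : L ≠ 0)
    (hroots : ∀ z ∈ L.aroots ℂ, z.re = b) {s t : ℝ} (hs : b < s) (hst : s < t) :
    L.eval t / (t - b) ^ L.natDegree =
        (1 - ((s - b) / (t - b)) ^ 2) * L.leadingCoeff +
          ((s - b) / (t - b)) ^ 2 * (L.eval s / (s - b) ^ L.natDegree) ↔
      ((L.aroots ℂ).filter fun z => z.im ≠ 0).card ≤ 2 := by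
  have hx : 0 < s - b := sub_pos.2 hs
  have hy : 0 < t - b := sub_pos.2 (hs.trans hst)
  set r : ℝ := ((s - b) / (t - b)) ^ 2
  have hr₀ : 0 < r := by positivity
  have hr₁ : r < 1 := pow_lt_one₀ (by positivity) ((div_lt_one hy).2 (by linarith)) two_ne_zero
  let U : Multiset ℝ :=
    ((L.aroots ℂ).filter fun z => 0 < z.im).map fun z => z.im ^ 2 / (s - b) ^ 2
  have hU : ∀ u ∈ U, 0 < u := by
    intro u hu
    obtain ⟨z, hz, rfl⟩ := Multiset.mem_map.1 hu
    have := (Multiset.mem_filter.1 hz).2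
    positivity
  have hs_eval : L.eval s / (s - b) ^ L.natDegree =
      L.leadingCoeff * (U.map fun u => 1 + u).prod := by
    rw [eval_div_pow_eq_of_aroots_re_eq hroots hs.ne', Multiset.map_map]
    rfl
  have ht_eval : L.eval t / (t - b) ^ L.natDegree =
      L.leadingCoeff * (U.map fun u => 1 + r * u).prod := by
    rw [eval_div_pow_eq_of_aroots_re_eq hroots (hs.trans hst).ne', Multiset.map_map]
    congr! 3 with z
    simp only [Function.comp_apply, r]
    field_simp
  rw [hs_eval, ht_eval, mul_left_comm r, mul_comm (1 - r), ← mul_add,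
    mul_right_inj' (leadingCoeff_ne_zero.2 hL), prod_one_add_mul_eq_iff hr₀ hr₁ hU,
    Multiset.card_map, card_filter_im_ne_zero (map_conj_aroots L)]
  omega

end VerticalLineRoots

-- The bound is the chord of `eval_div_pow_eq_iff_card_filter_im_ne_zero_le_two` at `b = -1 / a`,
-- `s = 0` and `t = 1`, for a polynomial with constant term `1` and leading coefficient `c`.
theorem chord_mul_pow_eq {n : ℕ} (hn : 2 ≤ n) {a : ℝ} (ha : 0 < a) (c : ℝ) :
    ((1 - (1 / (a + 1)) ^ 2) * c + (1 / (a + 1)) ^ 2 * (1 / (1 / a) ^ n)) * ((a + 1) / a) ^ n =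
      (a + 1) ^ (n - 2) * (a + 2) / a ^ (n - 1) * c + (a + 1) ^ (n - 2) := by
  obtain ⟨m, rfl⟩ := Nat.exists_eq_add_of_le' hn
  simp only [Nat.add_sub_cancel, Nat.add_succ_sub_one, div_pow, one_pow]
  field_simp
  ring

theorem lattice_points_eq_iff_of_roots_real_part (n : ℕ) (hn : 2 ≤ n) (a : ℝ) (ha : 0 < a)
    (P : Set (Fin n → ℝ))
    (hP : IsLatticePolytope P) (hfull : (interior P).Nonempty)
    (L : Polynomial ℝ) (hL : IsEhrhartPoly P L) (hdeg : L.natDegree = n)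
    (hroots : ∀ z ∈ (L.map (algebraMap ℝ ℂ)).roots, z.re = -1 / a) :
    ((latticePointCount P : ℝ) =
        (a + 1) ^ (n - 2) * (a + 2) / a ^ (n - 1) * (volume P).toReal + (a + 1) ^ (n - 2) ↔
      ((L.map (algebraMap ℝ ℂ)).roots.filter fun z => z.im ≠ 0).card ≤ 2) ∧
    ((n = 2 ∨ n = 3) →
      (latticePointCount P : ℝ) =
        (a + 1) ^ (n - 2) * (a + 2) / a ^ (n - 1) * (volume P).toReal + (a + 1) ^ (n - 2)) := by
  have hL0 : L ≠ 0 := ne_zero_of_natDegree_gt (n := 0) (by omega)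
  have hL1 : L.eval 1 = latticePointCount P := by simpa using hL 1 one_pos
  have hshift₀ : 0 - -1 / a = 1 / a := by ring
  have hshift₁ : 1 - -1 / a = (a + 1) / a := by field_simp; ring
  have hiff := eval_div_pow_eq_iff_card_filter_im_ne_zero_le_two hL0 hroots
    (div_neg_of_neg_of_pos neg_one_lt_zero ha) one_pos
  rw [hshift₀, hshift₁, div_div_div_cancel_right₀ ha.ne', div_eq_iff (by positivity), hdeg, hL1,
    hL.eval_zero hP (hfull.mono interior_subset), hL.leadingCoeff hP hL0 hdeg,
    chord_mul_pow_eq hn ha] at hiff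
  exact ⟨hiff, fun hn' => hiff.2 (card_filter_im_ne_zero_aroots_le_two (by omega))⟩
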